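/- arXiv:2512.12804 — 2 statements merged into one kernel-verified Lean document; each statement's English description precedes it below -/
import Mathlib

section
/- The PO-SCM M^N of a causal model M induces M: for every X ⊆ V (including X = ∅) and every x ∈ R(X), the interventional distribution of M^N over the endogenous variables equals that of M, i.e., P^N_{do(X=x)}(V = v) = P_{do(X=x)}(V = v) for all v ∈ R(V). -/
/-!
Fix values `a` of all the variables of `M`. The structural equation of an endogenous variable
`j ∉ X` says that the single potential outcome `j_{pa_j}`, with `pa_j` read off from `a`, takes
the value `a j`. Hence `P^N_{do(X = x)}`, summed over the potential outcomes with `a` fixed, is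
the product of the exogenous factors of `P_{do(X = x)}(a)` and the probability that these
selected potential outcomes, which are distinct and independent, take the values prescribed by
`a`. That probability is `∏_j P(j = a j | pa_j)`, the product of the endogenous factors.
-/

open Finset

noncomputable section

attribute [local instance] Classical.propDecidable

/-- An assignment of values to the variables. -/
abbrev Asg {ν : Type} (Val : ν → Type) : Type := (i : ν) → Val i

/-- A probabilistic causal model (a causal Bayesian network with explicit exogenous
variables): a signature (variables `ν` with value sets `Val`), a graph given by the
parent map `pa` (with `ord` a witness of acyclicity, and the variables in `exo` being
the roots), and a joint probability distribution that is Markov relative to the graph,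
presented by the conditional probability table `cpt i w x = P(i = x | pa i = w|_{pa i})`
of each variable given its parents (for exogenous variables this is the marginal). -/
structure CM (ν : Type) (Val : ν → Type) : Type where
  exo : Finset ν
  pa : ν → Finset ν
  ord : ν → ℕ
  cpt : (i : ν) → Asg Val → Val i → ℝ

/-- A basic counterfactual event `(Y = yv)_{X ← xv}`. -/
structure CFEvent (ν : Type) (Val : ν → Type) : Type where
  X : Finset ν
  xv : Asg Val
  Y : Finset ν
  yv : Asg Val

namespace CM

variable {ν : Type} {Val : ν → Type}

/-- Well-formedness of a causal model: exogenous variables are roots, the graph is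
acyclic, the conditional probability table of each variable depends only on its
parents, and each table is a probability distribution. -/
structure WF [Fintype ν] [∀ i, Fintype (Val i)] (M : CM ν Val) : Prop where
  pa_exo : ∀ i ∈ M.exo, M.pa i = ∅
  acyclic : ∀ i j, j ∈ M.pa i → M.ord j < M.ord i
  cpt_pa : ∀ (i : ν) (w w' : Asg Val) (x : Val i),
    (∀ j ∈ M.pa i, w j = w' j) → M.cpt i w x = M.cpt i w' x
  cpt_nonneg : ∀ i w x, 0 ≤ M.cpt i w x
  cpt_sum : ∀ i w, ∑ x, M.cpt i w x = 1

variable [Fintype ν] [∀ i, Fintype (Val i)] [∀ i, Nonempty (Val i)]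

variable (M : CM ν Val)

/-- The joint distribution `P(U = u, V = v)` (Markov factorization). -/
def joint (w : Asg Val) : ℝ := ∏ i, M.cpt i w (w i)

/-- The interventional distribution `P_{do(X = xv)}` (truncated factorization). -/
def pdo (X : Finset ν) (xv w : Asg Val) : ℝ :=
  if ∀ i ∈ X, w i = xv i then ∏ i ∈ Xᶜ, M.cpt i w (w i) else 0

/-- `P_{do(X = xv)}(Y = yv | U = u)`, where `u` is the exogenous part of `w`:
the probability of the basic counterfactual `(Y = yv)_{X ← xv}` given the world `w`. -/
def cfBasic (X : Finset ν) (xv : Asg Val) (Y : Finset ν) (yv : Asg Val) (w : Asg Val) : ℝ :=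
  (∑ w' : Asg Val,
      if (∀ i ∈ M.exo, w' i = w i) ∧ ∀ i ∈ Y, w' i = yv i then M.pdo X xv w' else 0) /
  (∑ w' : Asg Val, if ∀ i ∈ M.exo, w' i = w i then M.pdo X xv w' else 0)

/-- The probability of a complex counterfactual
`P(y_x, …, z_w) = Σ_{(u,v)} P(y_x | u,v) ⋯ P(z_w | u,v) P(u,v)`. -/
def cfProb (evs : List (CFEvent ν Val)) : ℝ :=
  ∑ w : Asg Val, (evs.map fun e => M.cfBasic e.X e.xv e.Y e.yv w).prod * M.joint w

/-- Conditional probability of a complex counterfactual given an actual event `Z = zv`: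
`P(y_x, …, z_w | Z = zv) = P(y_x, …, z_w, Z = zv) / P(Z = zv)`. -/
def cfProbCond (evs : List (CFEvent ν Val)) (Z : Finset ν) (zv : Asg Val) : ℝ :=
  (∑ w : Asg Val,
      (if ∀ i ∈ Z, w i = zv i then (evs.map fun e => M.cfBasic e.X e.xv e.Y e.yv w).prod
       else 0) * M.joint w) /
  (∑ w : Asg Val, if ∀ i ∈ Z, w i = zv i then M.joint w else 0)

/-- `M` is a structural causal model: every endogenous variable is a deterministic
function of its parents (the exogenous variables are automatically mutually
independent in this presentation). -/
def IsSCM : Prop :=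
  ∀ i ∉ M.exo, ∀ (w : Asg Val) (x : Val i), M.cpt i w x = 0 ∨ M.cpt i w x = 1

/-- The actualized refinement `M^{(u,v)}` of `M` at the actual world `a`:
for each endogenous variable, the conditional distribution given the *actual* values of
its parents is replaced by the point mass at the actual value of the variable. -/
def refine (a : Asg Val) : CM ν Val where
  exo := M.exo
  pa := M.pa
  ord := M.ord
  cpt := fun i w x =>
    if i ∉ M.exo ∧ ∀ j ∈ M.pa i, w j = a j then (if x = a i then 1 else 0)
    else M.cpt i w x

/-- The B-semantics probability of a basic counterfactual,
`P^B((Y = yv)_{X ← xv} | a) = (P^{a})_{do(X = xv)}(Y = yv | U = u)` where `u` is the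
exogenous part of the actual world `a`. -/
def pbBasic (a : Asg Val) (X : Finset ν) (xv : Asg Val) (Y : Finset ν) (yv : Asg Val) : ℝ :=
  (M.refine a).cfBasic X xv Y yv a

/-- The B-semantics probability of a complex counterfactual. -/
def pbProb (evs : List (CFEvent ν Val)) : ℝ :=
  ∑ w : Asg Val, (evs.map fun e => M.pbBasic w e.X e.xv e.Y e.yv).prod * M.joint w

/-- The conditional B-semantics probability of a complex counterfactual given `Z = zv`. -/
def pbProbCond (evs : List (CFEvent ν Val)) (Z : Finset ν) (zv : Asg Val) : ℝ :=
  (∑ w : Asg Val,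
      (if ∀ i ∈ Z, w i = zv i then (evs.map fun e => M.pbBasic w e.X e.xv e.Y e.yv).prod
       else 0) * M.joint w) /
  (∑ w : Asg Val, if ∀ i ∈ Z, w i = zv i then M.joint w else 0)

/-- An assignment of values to the parents of `i`. -/
def PaAsg (i : ν) : Type := (j : {j : ν // j ∈ M.pa i}) → Val j.1

instance (i : ν) : Fintype (M.PaAsg i) := by unfold PaAsg; infer_instance
instance (i : ν) : Nonempty (M.PaAsg i) := ⟨fun j => Classical.arbitrary (Val j.1)⟩

/-- Extend an assignment of the parents of `i` to a full assignment (arbitrarily). -/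
def extendPa (i : ν) (κ : M.PaAsg i) : Asg Val :=
  fun j => if h : j ∈ M.pa i then κ ⟨j, h⟩ else Classical.arbitrary (Val j)

/-- The index type of the potential outcome variables `X_{pa_X}` of the PO-SCM:
one for each endogenous variable `X` and each value `pa_X` of its parents. -/
def POI : Type := Σ i : {i : ν // i ∉ M.exo}, M.PaAsg i.1

instance : Fintype (POI M) := by unfold POI; infer_instance

/-- The value set of the potential outcome variable `X_{pa_X}` is that of `X`. -/
def POB : POI M → Type := fun p => Val p.1.1

instance (p : POI M) : Fintype (POB M p) := by unfold POB; infer_instance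
instance (p : POI M) : Nonempty (POB M p) := by unfold POB; infer_instance

/-- The type of values of the response variable `U_X` of the canonical frame:
functions from values of the parents of `X` to values of `X`. -/
def RType (i : ν) : Type := M.PaAsg i → Val i

instance (i : ν) : Fintype (M.RType i) := by unfold RType; infer_instance
instance (i : ν) : Nonempty (M.RType i) := ⟨fun _ => Classical.arbitrary (Val i)⟩

/-- The index type of the response variables of the canonical frame:
one for each endogenous variable. -/
def RVI : Type := {i : ν // i ∉ M.exo}

instance : Fintype (RVI M) := by unfold RVI; infer_instance

/-- The value set of the response variable `U_X`. -/
def RB : RVI M → Type := fun p => M.RType p.1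

instance (p : RVI M) : Fintype (RB M p) := by unfold RB; infer_instance
instance (p : RVI M) : Nonempty (RB M p) := by unfold RB; infer_instance

end CM

/-- The family of value sets of an extended signature `ν ⊕ β`. -/
def SumVal {ν β : Type} (Val : ν → Type) (B : β → Type) : ν ⊕ β → Type := fun i =>
  match i with
  | .inl j => Val j
  | .inr b => B b

section SumValInst

variable {ν β : Type} {Val : ν → Type} {B : β → Type}

instance [∀ i, Fintype (Val i)] [∀ b, Fintype (B b)] (i : ν ⊕ β) :
    Fintype (SumVal Val B i) := by
  cases i with
  | inl j => exact inferInstanceAs (Fintype (Val j))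
  | inr b => exact inferInstanceAs (Fintype (B b))

instance [∀ i, Nonempty (Val i)] [∀ b, Nonempty (B b)] (i : ν ⊕ β) :
    Nonempty (SumVal Val B i) := by
  cases i with
  | inl j => exact inferInstanceAs (Nonempty (Val j))
  | inr b => exact inferInstanceAs (Nonempty (B b))

/-- Lift an assignment on `ν` to one on `ν ⊕ β` (arbitrary on the new variables). -/
def liftAsg [∀ b, Nonempty (B b)] (xv : Asg Val) : Asg (SumVal Val B) := fun i =>
  match i with
  | .inl j => xv j
  | .inr b => Classical.arbitrary (B b)

/-- Lift a counterfactual event on the original variables to the extended signature. -/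
def liftCFEvent [∀ b, Nonempty (B b)] (e : CFEvent ν Val) : CFEvent (ν ⊕ β) (SumVal Val B) :=
  ⟨e.X.image Sum.inl, liftAsg e.xv, e.Y.image Sum.inl, liftAsg e.yv⟩

variable [Fintype ν] [Fintype β] [∀ i, Fintype (Val i)] [∀ b, Fintype (B b)]
  [∀ i, Nonempty (Val i)] [∀ b, Nonempty (B b)]

/-- The probability, computed in a model `N` over an extended signature, of a complex
counterfactual over the original variables. -/
def extProb (N : CM (ν ⊕ β) (SumVal Val B)) (evs : List (CFEvent ν Val)) : ℝ :=
  N.cfProb (evs.map liftCFEvent)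

/-- The probability, computed in a model `N` over an extended signature, of a complex
counterfactual over the original variables, conditional on an actual event `Z = zv`
over the original variables. -/
def extProbCond (N : CM (ν ⊕ β) (SumVal Val B)) (evs : List (CFEvent ν Val))
    (Z : Finset ν) (zv : Asg Val) : ℝ :=
  N.cfProbCond (evs.map liftCFEvent) (Z.image Sum.inl) (liftAsg zv)

/-- The probability, computed in a model `N` over an extended signature, of a basic
counterfactual conditional on the values `a` of *all* the original variables
(marginalizing over the added exogenous variables), via the law of total probability. -/
def extBasicCond (N : CM (ν ⊕ β) (SumVal Val B)) (a : Asg Val)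
    (X : Finset ν) (xv : Asg Val) (Y : Finset ν) (yv : Asg Val) : ℝ :=
  (∑ w : Asg (SumVal Val B),
      if ∀ i : ν, w (Sum.inl i) = a i then
        N.cfBasic (X.image Sum.inl) (liftAsg xv) (Y.image Sum.inl) (liftAsg yv) w * N.joint w
      else 0) /
  (∑ w : Asg (SumVal Val B), if ∀ i : ν, w (Sum.inl i) = a i then N.joint w else 0)

end SumValInst

namespace CM

variable {ν : Type} {Val : ν → Type} [Fintype ν] [∀ i, Fintype (Val i)] [∀ i, Nonempty (Val i)]
variable (M : CM ν Val)

/-- The PO-SCM `M^N` of `M`: the structural causal model obtained from `M` by adding,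
for each endogenous variable `X` and each value `pa_X` of its parents, an exogenous
potential outcome variable `X_{pa_X}` (with marginal `P_M(X | Pa_X = pa_X)`, all
exogenous variables mutually independent), and the structural equation
`X = X_{pa_X}` whenever `Pa_X = pa_X`. -/
def MN : CM (ν ⊕ POI M) (SumVal Val (POB M)) where
  exo := (M.exo.image Sum.inl) ∪ (univ.image Sum.inr)
  pa := fun i =>
    match i with
    | .inl j => ((M.pa j).image Sum.inl) ∪
        ((univ.filter fun p : POI M => p.1.1 = j).image Sum.inr)
    | .inr _ => ∅
  ord := fun i =>
    match i with
    | .inl j => M.ord j + 1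
    | .inr _ => 0
  cpt := fun i =>
    match i with
    | .inl j => fun w x =>
        if h : j ∈ M.exo then M.cpt j (fun k => w (Sum.inl k)) x
        else if x = w (Sum.inr ⟨⟨j, h⟩, fun k => w (Sum.inl k.1)⟩) then 1 else 0
    | .inr p => fun _ x => M.cpt p.1.1 (M.extendPa p.1.1 p.2) x

/-- `P^N(y_x, …, z_w)`: the probability of a complex counterfactual computed in the
PO-SCM `M^N`. -/
def pnProb (evs : List (CFEvent ν Val)) : ℝ := extProb M.MN evs

/-- `P^N(y_x, …, z_w | Z = zv)`: the conditional probability of a complex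
counterfactual computed in the PO-SCM `M^N`, given an actual event on the
endogenous variables. -/
def pnProbCond (evs : List (CFEvent ν Val)) (Z : Finset ν) (zv : Asg Val) : ℝ :=
  extProbCond M.MN evs Z zv

/-- `P^N((Y = yv)_{X ← xv} | U = u, V = v)`: the probability of a basic counterfactual
computed in the PO-SCM `M^N`, conditional on the exogenous and endogenous variables of
`M` only (marginalizing over the potential outcome variables). -/
def pnBasicCond (a : Asg Val) (X : Finset ν) (xv : Asg Val) (Y : Finset ν) (yv : Asg Val) : ℝ :=
  extBasicCond M.MN a X xv Y yv

/-- A canonical SCM for `M`, determined by a distribution `q` of the response variables: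
the SCM over the canonical frame, which adds for each endogenous variable `X` an
exogenous response variable `U_X` ranging over the functions `f_X : R(Pa_X) → R(X)`,
with the structural equation `X = f_X(Pa_X)` where `f_X` is the value of `U_X`. -/
def canonSCM (q : (p : RVI M) → RType M p.1 → ℝ) : CM (ν ⊕ RVI M) (SumVal Val (RB M)) where
  exo := (M.exo.image Sum.inl) ∪ (univ.image Sum.inr)
  pa := fun i =>
    match i with
    | .inl j => ((M.pa j).image Sum.inl) ∪
        ((univ.filter fun p : RVI M => p.1 = j).image Sum.inr)
    | .inr _ => ∅
  ord := fun i =>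
    match i with
    | .inl j => M.ord j + 1
    | .inr _ => 0
  cpt := fun i =>
    match i with
    | .inl j => fun w x =>
        if h : j ∈ M.exo then M.cpt j (fun k => w (Sum.inl k)) x
        else if x = w (Sum.inr ⟨j, h⟩) (fun k => w (Sum.inl k.1)) then 1 else 0
    | .inr p => fun _ x => q p x

/-- `q` is the distribution of the response variables of a canonical SCM for `M`:
it is a probability distribution (the response variables being mutually independent and
independent of the exogenous variables of `M`, whose distribution is kept), and it
reproduces the conditional probability tables of `M`:
`P_M(X = x | Pa_X = pa_X) = Σ_{f_X with f_X(pa_X) = x} P(U_X = f_X)`. -/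
def IsCanonicalDist (q : (p : RVI M) → RType M p.1 → ℝ) : Prop :=
  (∀ p x, 0 ≤ q p x) ∧ (∀ p, ∑ f, q p f = 1) ∧
  ∀ (p : RVI M) (κ : M.PaAsg p.1) (x : Val p.1),
    M.cpt p.1 (M.extendPa p.1 κ) x = ∑ f ∈ univ.filter (fun f : RType M p.1 => f κ = x), q p f

/-- The distribution of the response variables of the GH-SCM:
`P(U_X = f_X) = ∏_{pa_X} P_M(X = f_X(pa_X) | Pa_X = pa_X)`. -/
def qGH : (p : RVI M) → RType M p.1 → ℝ := fun p f =>
  ∏ κ : M.PaAsg p.1, M.cpt p.1 (M.extendPa p.1 κ) (f κ)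

end CM

/-- A default assignment. -/
def dfltAsg {ν : Type} (Val : ν → Type) [∀ i, Nonempty (Val i)] : Asg Val :=
  fun i => Classical.arbitrary (Val i)

section FinsetProducts

lemma prod_filter_mul_prod_subtype_not {ι R : Type*} [CommMonoid R] (s : Finset ι) (p : ι → Prop)
    [DecidablePred p] (f : ι → R) :
    (∏ i ∈ s with p i, f i) * ∏ i ∈ s.subtype (fun i => ¬ p i), f i = ∏ i ∈ s, f i := by
  rw [prod_subtype_eq_prod_filter, prod_filter_mul_prod_filter_not]

/-- For probability weights `q i`, the left side is the marginal on `T` of their product. -/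
lemma sum_pi_ite_prod_eq_prod {ι R : Type*} {A : ι → Type*} [Fintype ι] [DecidableEq ι]
    [∀ i, Fintype (A i)] [∀ i, DecidableEq (A i)] [CommSemiring R] (T : Finset ι)
    (q : ∀ i, A i → R) (hq : ∀ i ∉ T, ∑ x, q i x = 1) (c : ∀ i, A i) :
    (∑ b : ∀ i, A i, if ∀ i ∈ T, b i = c i then ∏ i, q i (b i) else 0) = ∏ i ∈ T, q i (c i) := by
  have factor (i : ι) :
      (∑ x, if i ∈ T → x = c i then q i x else 0) = if i ∈ T then q i (c i) else 1 := by
    by_cases hi : i ∈ T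
    · simp [hi]
    · simp [hi, hq]
  calc (∑ b : ∀ i, A i, if ∀ i ∈ T, b i = c i then ∏ i, q i (b i) else 0)
      = ∑ b : ∀ i, A i, ∏ i, if i ∈ T → b i = c i then q i (b i) else 0 := by
        simp only [prod_ite_zero, mem_univ, true_imp_iff]
    _ = ∏ i, ∑ x, if i ∈ T → x = c i then q i x else 0 :=
        (Fintype.prod_sum fun i x => if i ∈ T → x = c i then q i x else 0).symm
    _ = ∏ i ∈ T, q i (c i) := by simp only [factor, Fintype.prod_ite_mem]

end FinsetProducts

section JoinAsg

variable {ν β : Type} {Val : ν → Type} {B : β → Type}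

/-- Joining an assignment of `ν` and one of `β` to an assignment of the extended signature
`ν ⊕ β`. -/
def joinAsg : Asg Val × Asg B ≃ Asg (SumVal Val B) :=
  (Equiv.sumPiEquivProdPi (SumVal Val B)).symm

lemma sum_asg_sumVal {R : Type*} [AddCommMonoid R] [Fintype ν] [Fintype β]
    [∀ i, Fintype (Val i)] [∀ b, Fintype (B b)] (F : Asg (SumVal Val B) → R) :
    ∑ w, F w = ∑ a : Asg Val, ∑ b : Asg B, F (joinAsg (a, b)) := by
  rw [← joinAsg.sum_comp, Fintype.sum_prod_type]

end JoinAsg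

namespace CM

variable {ν : Type} {Val : ν → Type} [Fintype ν] [∀ i, Fintype (Val i)] [∀ i, Nonempty (Val i)]

variable (M : CM ν Val)

/-- The potential outcome variable `j_{pa_j}` whose index `pa_j` consists of the values that `a`
gives to the parents of `j`. -/
def selectedOutcome (a : Asg Val) : {j : ν // j ∉ M.exo} ↪ POI M where
  toFun j := ⟨j, fun k => a k.1⟩
  inj' _ _ h := congrArg Sigma.fst h

/-- The potential outcomes `j_{pa_j}` selected by `a`, for the endogenous `j ∉ X`: the ones whose
values the structural equations of `M^N` prescribe under `do(X = x)`. -/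
def selectedOutcomes (X : Finset ν) (a : Asg Val) : Finset (POI M) :=
  (Xᶜ.subtype (· ∉ M.exo)).map (M.selectedOutcome a)

lemma prod_MN_cpt_inl (X : Finset ν) (a : Asg Val) (b : Asg (POB M)) :
    ∏ j ∈ Xᶜ, M.MN.cpt (.inl j) (joinAsg (a, b)) (a j)
      = (∏ j ∈ Xᶜ with j ∈ M.exo, M.cpt j a (a j)) *
          if ∀ p ∈ M.selectedOutcomes X a, b p = a p.1.1 then 1 else 0 := by
  rw [← prod_filter_mul_prod_subtype_not _ (· ∈ M.exo)]
  congr 1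
  · refine prod_congr rfl fun j hj => ?_
    exact dif_pos (mem_filter.1 hj).2
  · have structural_equation (j : {j : ν // j ∉ M.exo}) :
        M.MN.cpt (.inl j.1) (joinAsg (a, b)) (a j)
          = if b (M.selectedOutcome a j) = a j then 1 else 0 :=
      (dif_neg j.2).trans (if_congr eq_comm rfl rfl)
    simp only [structural_equation, prod_ite_zero, prod_const_one, selectedOutcomes,
      forall_mem_map]
    rfl

lemma MN_pdo_joinAsg (X : Finset ν) (xv a : Asg Val) (b : Asg (POB M)) :
    M.MN.pdo (X.image Sum.inl) (liftAsg xv) (joinAsg (a, b))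
      = if ∀ i ∈ X, a i = xv i then
          (∏ j ∈ Xᶜ with j ∈ M.exo, M.cpt j a (a j)) *
            if ∀ p ∈ M.selectedOutcomes X a, b p = a p.1.1 then
              ∏ p : POI M, M.cpt p.1.1 (M.extendPa p.1.1 p.2) (b p)
            else 0
        else 0 := by
  have agree_iff : (∀ i ∈ X.image Sum.inl, joinAsg (a, b) i = liftAsg (B := POB M) xv i) ↔
      ∀ i ∈ X, a i = xv i := forall_mem_image
  simp only [pdo, agree_iff]
  congr 1
  refine (prod_congr (s₂ := Xᶜ.disjSum univ) (by ext (i | i) <;> simp) fun _ _ => rfl).trans ?_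
  rw [prod_disjSum]
  refine (congrArg (· * _) (M.prod_MN_cpt_inl X a b)).trans ?_
  rw [mul_assoc, ite_mul, one_mul, zero_mul]
  rfl

variable {M}

lemma WF.cpt_extendPa (hM : M.WF) (a : Asg Val) (i : ν) (x : Val i) :
    M.cpt i (M.extendPa i fun k => a k.1) x = M.cpt i a x :=
  hM.cpt_pa i _ _ x fun k hk => by simp [extendPa, hk]

lemma WF.prod_selectedOutcomes (hM : M.WF) (X : Finset ν) (a : Asg Val) :
    ∏ p ∈ M.selectedOutcomes X a, M.cpt p.1.1 (M.extendPa p.1.1 p.2) (a p.1.1)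
      = ∏ j ∈ Xᶜ.subtype (· ∉ M.exo), M.cpt j a (a j) := by
  rw [selectedOutcomes, prod_map]
  exact prod_congr rfl fun j _ => hM.cpt_extendPa a j (a j)

lemma WF.sum_MN_pdo_joinAsg (hM : M.WF) (X : Finset ν) (xv a : Asg Val) :
    ∑ b : Asg (POB M), M.MN.pdo (X.image Sum.inl) (liftAsg xv) (joinAsg (a, b)) = M.pdo X xv a := by
  simp only [MN_pdo_joinAsg]
  rw [pdo]
  split_ifs
  · have selected_probability :
        (∑ b : Asg (POB M), if ∀ p ∈ M.selectedOutcomes X a, b p = a p.1.1 then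
            ∏ p : POI M, M.cpt p.1.1 (M.extendPa p.1.1 p.2) (b p) else 0)
          = ∏ j ∈ Xᶜ.subtype (· ∉ M.exo), M.cpt j a (a j) :=
      (sum_pi_ite_prod_eq_prod _ (fun p : POI M => M.cpt p.1.1 (M.extendPa p.1.1 p.2))
        (fun _ _ => hM.cpt_sum _ _) fun p => a p.1.1).trans (hM.prod_selectedOutcomes X a)
    rw [← mul_sum, selected_probability, prod_filter_mul_prod_subtype_not]
  · exact sum_const_zero

end CM

theorem MN_induces_general
    {ν : Type} {Val : ν → Type} [Fintype ν] [∀ i, Fintype (Val i)] [∀ i, Nonempty (Val i)]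
    (M : CM ν Val) (hM : M.WF) (X : Finset ν) (xv : Asg Val) (E : Set (Asg Val)) :
    (∑ w : Asg (SumVal Val (CM.POB M)),
        if (fun i => w (Sum.inl i)) ∈ E then M.MN.pdo (X.image Sum.inl) (liftAsg xv) w else 0)
    = ∑ a : Asg Val, if a ∈ E then M.pdo X xv a else 0 := by
  rw [sum_asg_sumVal]
  refine sum_congr rfl fun a _ => ?_
  change (∑ b : Asg (CM.POB M), if a ∈ E then
    M.MN.pdo (X.image Sum.inl) (liftAsg xv) (joinAsg (a, b)) else 0) = _
  split_ifs
  · exact hM.sum_MN_pdo_joinAsg X xv a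
  · exact sum_const_zero

/-- The PO-SCM `M^N` of a causal model `M` induces `M`: for every `X ⊆ V` (including
`X = ∅`) and every `x ∈ R(X)`, the interventional distribution of `M^N` over the
endogenous variables equals that of `M`, i.e.
`P^N_{do(X=x)}(V = v) = P_{do(X=x)}(V = v)` for all `v ∈ R(V)`. -/
theorem MN_induces
    {ν : Type} {Val : ν → Type} [Fintype ν] [∀ i, Fintype (Val i)] [∀ i, Nonempty (Val i)]
    (M : CM ν Val) (hM : M.WF)
    (X : Finset ν) (hX : ∀ i ∈ X, i ∉ M.exo) (xv : Asg Val) (v : Asg Val) :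
    (∑ w : Asg (SumVal Val (CM.POB M)),
        if ∀ i : ν, i ∉ M.exo → w (Sum.inl i) = v i then
          M.MN.pdo (X.image Sum.inl) (liftAsg xv) w
        else 0)
    = ∑ w : Asg Val, if ∀ i : ν, i ∉ M.exo → w i = v i then M.pdo X xv w else 0 := by
  convert MN_induces_general M hM X xv {a | ∀ i, i ∉ M.exo → a i = v i} <;> exact Iff.rfl

end
end

section
/- The equivalence of the B-semantics and the PO-semantics does not extend to complex counterfactuals: let M be the causal model with binary endogenous variables X and Y, graph X → Y, conditional probabilities P(Y=1 | X=1) = p and P(Y=1 | X=0) = q with 0 < p < q < 1, and P(X=0) > 0. Then P^B((Y=1)_{X←1}, (Y=0)_{X←1} | X=0, Y=0) = p(1−p), whereas P^N((Y=1)_{X←1}, (Y=0)_{X←1} | X=0, Y=0) = 0. -/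
open Finset

noncomputable section

attribute [local instance] Classical.propDecidable

/-- The causal model of Example 3: binary endogenous variables `X` (index `false`) and
`Y` (index `true`) with graph `X → Y`, `P(X=1) = px1`, `P(Y=1 | X=1) = p` and
`P(Y=1 | X=0) = q` (the exogenous variables determining `X` are left implicit:
`X` has no parents). Values: `true` is `1`, `false` is `0`. -/
def M2 (p q px1 : ℝ) : CM Bool (fun _ => Bool) where
  exo := ∅
  pa := fun i => match i with
    | false => ∅
    | true => {false}
  ord := fun i => match i with
    | false => 0
    | true => 1
  cpt := fun i => match i with
    | false => fun _ b => if b then px1 else 1 - px1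
    | true => fun w b =>
        if w false then (if b then p else 1 - p) else (if b then q else 1 - q)

/-!
In the PO-SCM, as in every structural causal model, an intervention determines a unique solution of
the structural equations for each value of the exogenous variables, so two counterfactuals with the
same antecedent and contradictory consequents never both have positive probability in one world.
Under the B-semantics the conjuncts are instead evaluated independently of each other in the
actualized refinement. Setting `X` to its counterfactual value `1` makes `Y` fall back on its
unrefined distribution `P(Y | X = 1)`, so that the two conjuncts contribute the factors `p` and
`1 - p`.
-/

/-- Two counterfactuals with the same antecedent and contradictory consequents, such as
`(Y = 1)_{X ← x}` and `(Y = 0)_{X ← x}`: these are never jointly possible in a structural causal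
model. The antecedents need only agree on the variables that are intervened on. -/
structure CFEvent.Contradicts {ν : Type} {Val : ν → Type} (e e' : CFEvent ν Val) : Prop where
  X_eq : e.X = e'.X
  xv_eq : ∀ i ∈ e.X, e.xv i = e'.xv i
  yv_ne : ∃ i ∈ e.Y, i ∈ e'.Y ∧ e.yv i ≠ e'.yv i

lemma CFEvent.Contradicts.liftCFEvent {ν β : Type} {Val : ν → Type} {B : β → Type}
    [∀ b, Nonempty (B b)] {e e' : CFEvent ν Val} (h : e.Contradicts e') :
    (liftCFEvent e : CFEvent (ν ⊕ β) (SumVal Val B)).Contradicts (liftCFEvent e') where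
  X_eq := congrArg (Finset.image Sum.inl) h.X_eq
  xv_eq := by
    intro i hi
    obtain ⟨j, hj, rfl⟩ := mem_image.1 hi
    exact h.xv_eq j hj
  yv_ne :=
    let ⟨i, hi, hi', hne⟩ := h.yv_ne
    ⟨Sum.inl i, mem_image_of_mem _ hi, mem_image_of_mem _ hi', hne⟩

namespace CM

variable {ν : Type} {Val : ν → Type} [Fintype ν] {M : CM ν Val}

section Interventional

lemma pdo_ne_zero_iff {X : Finset ν} {xv w : Asg Val} :
    M.pdo X xv w ≠ 0 ↔ (∀ i ∈ X, w i = xv i) ∧ ∀ i ∉ X, M.cpt i w (w i) ≠ 0 := by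
  simp [pdo, prod_ne_zero_iff]

lemma pdo_congr {X : Finset ν} {xv xv' : Asg Val} (h : ∀ i ∈ X, xv i = xv' i) (w : Asg Val) :
    M.pdo X xv w = M.pdo X xv' w := by
  have hiff : (∀ i ∈ X, w i = xv i) ↔ ∀ i ∈ X, w i = xv' i :=
    forall₂_congr fun i hi => by rw [h i hi]
  simp only [pdo, hiff]

variable [∀ i, Fintype (Val i)]

lemma ite_pdo_eq_prod_mul_pdo_union (hM : M.WF) {S T : Finset ν} (hST : Disjoint S T)
    (hpa : ∀ i ∈ T, M.pa i ⊆ S ∪ T) (b w : Asg Val) :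
    (if ∀ i ∈ T, w i = b i then M.pdo S b w else 0) =
      (∏ i ∈ T, M.cpt i b (b i)) * M.pdo (S ∪ T) b w := by
  by_cases hw : ∀ i ∈ S ∪ T, w i = b i
  · have hwS : ∀ i ∈ S, w i = b i := fun i hi => hw i (mem_union_left _ hi)
    have hwT : ∀ i ∈ T, w i = b i := fun i hi => hw i (mem_union_right _ hi)
    have hcpt : ∀ i ∈ T, M.cpt i w (w i) = M.cpt i b (b i) := fun i hi => by
      rw [hwT i hi, hM.cpt_pa i w b _ fun j hj => hw j (hpa i hi hj)]
    have hcompl : Sᶜ = T ∪ (S ∪ T)ᶜ := by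
      ext i
      have hiT : i ∈ S → i ∉ T := fun hi => disjoint_left.1 hST hi
      simp only [mem_compl, mem_union]
      tauto
    have hdisj : Disjoint T (S ∪ T)ᶜ := disjoint_compl_right.mono_left subset_union_right
    rw [pdo, pdo, if_pos hwT, if_pos hwS, if_pos hw, hcompl, prod_union hdisj,
      prod_congr rfl hcpt]
  · have hzero : M.pdo (S ∪ T) b w = 0 := if_neg hw
    rw [hzero, mul_zero, pdo, ← ite_and, if_neg]
    rintro ⟨hwT, hwS⟩
    exact hw fun i hi => (mem_union.1 hi).elim (hwS i) (hwT i)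

lemma exists_notMem_pa_subset (hM : M.WF) {S : Finset ν} (hS : S ≠ univ) :
    ∃ i ∉ S, M.pa i ⊆ S := by
  obtain ⟨i, hi, hmin⟩ :=
    exists_min_image Sᶜ M.ord (nonempty_iff_ne_empty.2 (compl_eq_empty_iff S |>.not.2 hS))
  refine ⟨i, mem_compl.1 hi, fun j hj => by_contra fun hjS => ?_⟩
  exact (hM.acyclic i j hj).not_ge (hmin j (mem_compl.2 hjS))

lemma pdo_eq_sum_cpt_mul_pdo (hM : M.WF) {S : Finset ν} {i : ν} (hi : i ∉ S)
    (hpa : M.pa i ⊆ S) (b w : Asg Val) :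
    M.pdo S b w = ∑ x, M.cpt i b x * M.pdo (S ∪ {i}) (Function.update b i x) w := by
  have hS : ∀ x, ∀ j ∈ S, b j = Function.update b i x j := fun x j hj =>
    (Function.update_of_ne (ne_of_mem_of_not_mem hj hi) x b).symm
  calc M.pdo S b w = ∑ x, if w i = x then M.pdo S b w else 0 := by simp
    _ = ∑ x, M.cpt i b x * M.pdo (S ∪ {i}) (Function.update b i x) w :=
      sum_congr rfl fun x _ => by
        have h := ite_pdo_eq_prod_mul_pdo_union hM (disjoint_singleton_right.2 hi)
          (by simpa using hpa.trans (subset_insert i S)) (Function.update b i x) w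
        simp only [mem_singleton, forall_eq, prod_singleton, Function.update_self] at h
        rw [pdo_congr (hS x), h, hM.cpt_pa i b _ x fun j hj => hS x j (hpa hj)]

theorem sum_pdo (hM : M.WF) (S : Finset ν) (b : Asg Val) : ∑ w, M.pdo S b w = 1 := by
  induction S using WellFoundedGT.induction generalizing b with
  | ind S ih =>
    by_cases hS : S = univ
    · subst hS
      simp [pdo, ← funext_iff]
    · obtain ⟨i, hi, hpa⟩ := exists_notMem_pa_subset hM hS
      have hlt : S < S ∪ {i} := left_lt_sup.2 fun h => hi (singleton_subset_iff.1 h)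
      simp only [pdo_eq_sum_cpt_mul_pdo hM hi hpa b]
      rw [sum_comm]
      simp only [← mul_sum, ih _ hlt, mul_one, hM.cpt_sum]

lemma sum_ite_pdo_eq_prod (hM : M.WF) {S T : Finset ν} (hST : Disjoint S T)
    (hpa : ∀ i ∈ T, M.pa i ⊆ S ∪ T) (b : Asg Val) :
    (∑ w, if ∀ i ∈ T, w i = b i then M.pdo S b w else 0) = ∏ i ∈ T, M.cpt i b (b i) := by
  simp only [ite_pdo_eq_prod_mul_pdo_union hM hST hpa, ← mul_sum, sum_pdo hM, mul_one]

end Interventional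

section Counterfactual

variable [∀ i, Fintype (Val i)]

theorem cfBasic_eq_prod_cpt (hM : M.WF) {X Y : Finset ν} {xv yv w b : Asg Val}
    (hX : ∀ i ∈ X, b i = xv i) (hexo : ∀ i ∈ M.exo, b i = w i) (hY : ∀ i ∈ Y, b i = yv i)
    (hX_exo : Disjoint X M.exo) (hX_Y : Disjoint X Y) (hexo_Y : Disjoint M.exo Y)
    (hpa : ∀ i ∈ Y, M.pa i ⊆ X ∪ (M.exo ∪ Y)) (hpos : ∏ i ∈ M.exo, M.cpt i w (w i) ≠ 0) :
    M.cfBasic X xv Y yv w = ∏ i ∈ Y, M.cpt i b (b i) := by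
  have hpa_exo : ∀ T, ∀ i ∈ M.exo, M.pa i ⊆ T := fun T i hi => hM.pa_exo i hi ▸ empty_subset T
  have hexo_prod : ∏ i ∈ M.exo, M.cpt i b (b i) = ∏ i ∈ M.exo, M.cpt i w (w i) :=
    prod_congr rfl fun i hi => by
      rw [hexo i hi, hM.cpt_pa i b w _ fun j hj => (notMem_empty j (hpa_exo ∅ i hi hj)).elim]
  have hden : (∑ w', if ∀ i ∈ M.exo, w' i = w i then M.pdo X xv w' else 0) =
      ∏ i ∈ M.exo, M.cpt i b (b i) := by
    rw [← sum_ite_pdo_eq_prod hM hX_exo (hpa_exo _)]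
    refine sum_congr rfl fun w' _ => ?_
    rw [pdo_congr fun i hi => (hX i hi).symm]
    exact if_congr (forall₂_congr fun i hi => by rw [hexo i hi]) rfl rfl
  have hnum : (∑ w', if (∀ i ∈ M.exo, w' i = w i) ∧ ∀ i ∈ Y, w' i = yv i
      then M.pdo X xv w' else 0) = ∏ i ∈ M.exo ∪ Y, M.cpt i b (b i) := by
    rw [← sum_ite_pdo_eq_prod hM (disjoint_union_right.2 ⟨hX_exo, hX_Y⟩)
      (fun i hi => (mem_union.1 hi).elim (hpa_exo _ i) (hpa i))]
    refine sum_congr rfl fun w' _ => ?_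
    rw [pdo_congr fun i hi => (hX i hi).symm]
    refine if_congr ?_ rfl rfl
    rw [forall_mem_union]
    exact and_congr (forall₂_congr fun i hi => by rw [hexo i hi])
      (forall₂_congr fun i hi => by rw [hY i hi])
  rw [cfBasic, hnum, hden, prod_union hexo_Y, hexo_prod, mul_div_cancel_left₀ _ hpos]

end Counterfactual

section BSemantics

lemma refine_cpt_of_mem_exo {a : Asg Val} {i : ν} (hi : i ∈ M.exo) :
    (M.refine a).cpt i = M.cpt i := by
  funext w x
  exact if_neg fun h => h.1 hi

lemma refine_cpt_of_pa_ne {a w : Asg Val} {i : ν} (h : ∃ j ∈ M.pa i, w j ≠ a j) :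
    (M.refine a).cpt i w = M.cpt i w := by
  funext x
  obtain ⟨j, hj, hne⟩ := h
  exact if_neg fun h => hne (h.2 j hj)

variable [∀ i, Fintype (Val i)]

lemma WF.refine (hM : M.WF) (a : Asg Val) : (M.refine a).WF where
  pa_exo := hM.pa_exo
  acyclic := hM.acyclic
  cpt_pa i w w' x h := by
    have hiff : (∀ j ∈ M.pa i, w j = a j) ↔ ∀ j ∈ M.pa i, w' j = a j :=
      forall₂_congr fun j hj => by rw [h j hj]
    simp only [CM.refine, hiff, hM.cpt_pa i w w' x h]
  cpt_nonneg i w x := by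
    have := hM.cpt_nonneg i w x
    dsimp only [CM.refine]
    split_ifs <;> positivity
  cpt_sum i w := by
    by_cases h : i ∉ M.exo ∧ ∀ j ∈ M.pa i, w j = a j
    · simp [CM.refine, if_pos h]
    · simp only [CM.refine, if_neg h, hM.cpt_sum]

/-- The refinement only affects the distribution given the actual values of the parents, so a
counterfactual change in the parents of each variable in `Y` restores the distributions of `M`. -/
theorem pbBasic_eq_prod_cpt (hM : M.WF) {X Y : Finset ν} {xv yv a b : Asg Val}
    (hX : ∀ i ∈ X, b i = xv i) (hexo : ∀ i ∈ M.exo, b i = a i) (hY : ∀ i ∈ Y, b i = yv i)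
    (hX_exo : Disjoint X M.exo) (hX_Y : Disjoint X Y) (hexo_Y : Disjoint M.exo Y)
    (hpa : ∀ i ∈ Y, M.pa i ⊆ X ∪ (M.exo ∪ Y)) (hpos : ∏ i ∈ M.exo, M.cpt i a (a i) ≠ 0)
    (hne : ∀ i ∈ Y, ∃ j ∈ M.pa i, b j ≠ a j) :
    M.pbBasic a X xv Y yv = ∏ i ∈ Y, M.cpt i b (b i) := by
  have hpos' : ∏ i ∈ M.exo, (M.refine a).cpt i a (a i) ≠ 0 := by
    rwa [prod_congr rfl fun i hi => by rw [refine_cpt_of_mem_exo hi]]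
  calc M.pbBasic a X xv Y yv = ∏ i ∈ Y, (M.refine a).cpt i b (b i) :=
        cfBasic_eq_prod_cpt (hM.refine a) hX hexo hY hX_exo hX_Y hexo_Y hpa hpos'
    _ = ∏ i ∈ Y, M.cpt i b (b i) :=
        prod_congr rfl fun i hi => by rw [refine_cpt_of_pa_ne (hne i hi)]

lemma pbProbCond_univ (evs : List (CFEvent ν Val)) {a : Asg Val} (ha : M.joint a ≠ 0) :
    M.pbProbCond evs univ a = (evs.map fun e => M.pbBasic a e.X e.xv e.Y e.yv).prod := by
  simp [pbProbCond, ← funext_iff, ite_mul, ha]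

end BSemantics

section StructuralCausalModel

variable [∀ i, Fintype (Val i)]

lemma IsSCM.eq_of_cpt_ne_zero (hSCM : M.IsSCM) (hM : M.WF) {i : ν} (hi : i ∉ M.exo) {w : Asg Val}
    {x y : Val i} (hx : M.cpt i w x ≠ 0) (hy : M.cpt i w y ≠ 0) : x = y := by
  have hx1 := (hSCM i hi w x).resolve_left hx
  have hy1 := (hSCM i hi w y).resolve_left hy
  by_contra hxy
  have hle : M.cpt i w x + M.cpt i w y ≤ ∑ z, M.cpt i w z := by
    rw [← sum_pair hxy]
    exact sum_le_univ_sum_of_nonneg (hM.cpt_nonneg i w)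
  linarith [hM.cpt_sum i w]

theorem IsSCM.eq_of_pdo_ne_zero (hSCM : M.IsSCM) (hM : M.WF) {X : Finset ν} {xv w w' : Asg Val}
    (hexo : ∀ i ∈ M.exo, w i = w' i) (hw : M.pdo X xv w ≠ 0) (hw' : M.pdo X xv w' ≠ 0) :
    w = w' := by
  obtain ⟨hwX, hwcpt⟩ := pdo_ne_zero_iff.1 hw
  obtain ⟨hwX', hwcpt'⟩ := pdo_ne_zero_iff.1 hw'
  funext i
  induction i using (measure M.ord).wf.induction with
  | _ i ih =>
    by_cases hiX : i ∈ X
    · exact (hwX i hiX).trans (hwX' i hiX).symm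
    by_cases hi : i ∈ M.exo
    · exact hexo i hi
    have hcpt : M.cpt i w (w' i) = M.cpt i w' (w' i) :=
      hM.cpt_pa i w w' _ fun j hj => ih j (hM.acyclic i j hj)
    exact hSCM.eq_of_cpt_ne_zero hM hi (hwcpt i hiX) (hcpt ▸ hwcpt' i hiX)

lemma exists_pdo_ne_zero_of_cfBasic_ne_zero {X Y : Finset ν} {xv yv w : Asg Val}
    (h : M.cfBasic X xv Y yv w ≠ 0) :
    ∃ w', (∀ i ∈ M.exo, w' i = w i) ∧ (∀ i ∈ Y, w' i = yv i) ∧ M.pdo X xv w' ≠ 0 := by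
  obtain ⟨w', -, hw'⟩ := exists_ne_zero_of_sum_ne_zero (div_ne_zero_iff.1 h).1
  obtain ⟨⟨hexo, hY⟩, hpdo⟩ := ite_ne_right_iff.1 hw'
  exact ⟨w', hexo, hY, hpdo⟩

theorem IsSCM.cfBasic_mul_cfBasic_eq_zero_of_contradicts (hSCM : M.IsSCM) (hM : M.WF)
    {e e' : CFEvent ν Val} (h : e.Contradicts e') (w : Asg Val) :
    M.cfBasic e.X e.xv e.Y e.yv w * M.cfBasic e'.X e'.xv e'.Y e'.yv w = 0 := by
  by_contra hne
  obtain ⟨v, hv_exo, hvY, hv⟩ :=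
    exists_pdo_ne_zero_of_cfBasic_ne_zero (left_ne_zero_of_mul hne)
  obtain ⟨v', hv'_exo, hvY', hv'⟩ :=
    exists_pdo_ne_zero_of_cfBasic_ne_zero (right_ne_zero_of_mul hne)
  rw [← h.X_eq, ← pdo_congr h.xv_eq] at hv'
  have hvv' : v = v' :=
    hSCM.eq_of_pdo_ne_zero hM (fun i hi => (hv_exo i hi).trans (hv'_exo i hi).symm) hv hv'
  obtain ⟨i, hi, hi', hyv⟩ := h.yv_ne
  exact hyv ((hvY i hi).symm.trans (hvv' ▸ hvY' i hi'))

theorem IsSCM.cfProbCond_eq_zero_of_contradicts (hSCM : M.IsSCM) (hM : M.WF)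
    {evs : List (CFEvent ν Val)} {e e' : CFEvent ν Val} (he : e ∈ evs) (he' : e' ∈ evs)
    (h : e.Contradicts e') (Z : Finset ν) (zv : Asg Val) : M.cfProbCond evs Z zv = 0 := by
  have hprod : ∀ w, (evs.map fun e => M.cfBasic e.X e.xv e.Y e.yv w).prod = 0 := fun w =>
    have hmul := hSCM.cfBasic_mul_cfBasic_eq_zero_of_contradicts hM h w
    List.prod_eq_zero <| List.mem_map.2 <|
      (mul_eq_zero.1 hmul).elim (⟨e, he, ·⟩) (⟨e', he', ·⟩)
  simp [cfProbCond, hprod]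

end StructuralCausalModel

section POSemantics

variable [∀ i, Fintype (Val i)] [∀ i, Nonempty (Val i)]

lemma isSCM_MN (M : CM ν Val) : M.MN.IsSCM := by
  rintro (j | p) hi w x
  · have hj : j ∉ M.exo := fun hj => hi (mem_union_left _ (mem_image_of_mem _ hj))
    simp only [MN, dif_neg hj]
    split_ifs <;> simp
  · exact absurd (mem_union_right _ (mem_image_of_mem _ (mem_univ p))) hi

lemma WF.MN (hM : M.WF) : M.MN.WF where
  pa_exo := by
    rintro (j | p) hi
    · have hj : j ∈ M.exo := by simpa [CM.MN] using hi
      have hpo : (univ.filter fun p : POI M => p.1.1 = j) = ∅ :=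
        filter_eq_empty_iff.2 fun p _ hp => p.1.2 (hp ▸ hj)
      simp only [CM.MN, hM.pa_exo j hj, hpo, image_empty, union_empty]
    · rfl
  acyclic := by
    rintro (i | p) (j | r) hj
    · exact Nat.succ_lt_succ (hM.acyclic i j (by simpa [CM.MN] using hj))
    · exact Nat.succ_pos _
    all_goals exact absurd hj (notMem_empty _)
  cpt_pa := by
    rintro (i | p) w w' x h
    · have hpa : ∀ j ∈ M.pa i, w (Sum.inl j) = w' (Sum.inl j) := fun j hj =>
        h _ (mem_union_left _ (mem_image_of_mem _ hj))
      by_cases hi : i ∈ M.exo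
      · simpa only [CM.MN, dif_pos hi] using hM.cpt_pa i _ _ x hpa
      · have hpo : ∀ κ : M.PaAsg i,
            w (Sum.inr ⟨⟨i, hi⟩, κ⟩) = w' (Sum.inr ⟨⟨i, hi⟩, κ⟩) := fun κ =>
          h _ (mem_union_right _ (mem_image_of_mem _ (mem_filter.2 ⟨mem_univ _, rfl⟩)))
        have hval : w (Sum.inr ⟨⟨i, hi⟩, fun k => w (Sum.inl k.1)⟩) =
            w' (Sum.inr ⟨⟨i, hi⟩, fun k => w' (Sum.inl k.1)⟩) :=
          (hpo _).trans <| congrArg (β := Val i)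
            (fun κ : M.PaAsg i => w' (Sum.inr ⟨⟨i, hi⟩, κ⟩)) (funext fun k => hpa k.1 k.2)
        simp only [CM.MN, dif_neg hi]
        exact if_congr (by rw [hval]) rfl rfl
    · rfl
  cpt_nonneg := by
    rintro (i | p) w x
    · dsimp only [CM.MN]
      split_ifs
      · exact hM.cpt_nonneg i _ x
      all_goals positivity
    · exact hM.cpt_nonneg p.1.1 _ x
  cpt_sum := by
    rintro (i | p) w
    · by_cases hi : i ∈ M.exo
      · simp only [CM.MN, dif_pos hi]
        exact hM.cpt_sum i _
      · simp only [CM.MN, dif_neg hi]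
        exact Fintype.sum_ite_eq' _ _
    · exact hM.cpt_sum p.1.1 _

theorem pnProbCond_eq_zero_of_contradicts (hM : M.WF) {evs : List (CFEvent ν Val)}
    {e e' : CFEvent ν Val} (he : e ∈ evs) (he' : e' ∈ evs) (h : e.Contradicts e')
    (Z : Finset ν) (zv : Asg Val) : M.pnProbCond evs Z zv = 0 :=
  (isSCM_MN M).cfProbCond_eq_zero_of_contradicts hM.MN
    (List.mem_map_of_mem he) (List.mem_map_of_mem he') h.liftCFEvent _ _

end POSemantics

end CM

section Example3

variable {p q px1 : ℝ}

lemma wf_M2 (hp : p ∈ Set.Icc 0 1) (hq : q ∈ Set.Icc 0 1) (hpx1 : px1 ∈ Set.Icc 0 1) :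
    (M2 p q px1).WF where
  pa_exo _ hi := absurd hi (notMem_empty _)
  acyclic i j hj := by cases i <;> simp_all [M2]
  cpt_pa i w w' x h := by cases i <;> simp_all [M2]
  cpt_nonneg i w x := by
    cases i <;> dsimp only [M2] <;> split_ifs <;>
      linarith [hp.1, hp.2, hq.1, hq.2, hpx1.1, hpx1.2]
  cpt_sum i w := by cases i <;> cases h : w false <;> simp [M2, h]

lemma joint_M2_false_ne_zero (hq : q ≠ 1) (hpx1 : px1 ≠ 1) :
    (M2 p q px1).joint (fun _ => false) ≠ 0 := by
  simp [CM.joint, M2, sub_ne_zero, hq.symm, hpx1.symm]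

lemma pbBasic_M2_false (hM : (M2 p q px1).WF) (y : Bool) :
    (M2 p q px1).pbBasic (fun _ => false) {false} (fun _ => true) {true} (fun _ => y) =
      if y then p else 1 - p := by
  rw [CM.pbBasic_eq_prod_cpt hM (b := fun i => if i then y else true)] <;> simp [M2]

end Example3

/-- The equivalence of the B-semantics and the PO-semantics does not extend to complex
counterfactuals: in the model `M2` (with `0 < p < q < 1` and `P(X=0) > 0`),
`P^B((Y=1)_{X←1}, (Y=0)_{X←1} | X=0, Y=0) = p(1−p)`, whereas
`P^N((Y=1)_{X←1}, (Y=0)_{X←1} | X=0, Y=0) = 0`. -/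
theorem pb_ne_pn_complex (p q px1 : ℝ) (hp : 0 < p) (hpq : p < q) (hq : q < 1)
    (hpx0 : 0 ≤ px1) (hpx1 : px1 < 1) :
    (M2 p q px1).pbProbCond
        [⟨{false}, fun _ => true, {true}, fun _ => true⟩,
         ⟨{false}, fun _ => true, {true}, fun _ => false⟩]
        {false, true} (fun _ => false)
      = p * (1 - p) ∧
    (M2 p q px1).pnProbCond
        [⟨{false}, fun _ => true, {true}, fun _ => true⟩,
         ⟨{false}, fun _ => true, {true}, fun _ => false⟩]
        {false, true} (fun _ => false)
      = 0 := by
  have hM : (M2 p q px1).WF :=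
    wf_M2 ⟨hp.le, (hpq.trans hq).le⟩ ⟨(hp.trans hpq).le, hq.le⟩ ⟨hpx0, hpx1.le⟩
  have hcontra : CFEvent.Contradicts (Val := fun _ : Bool => Bool)
      ⟨{false}, fun _ => true, {true}, fun _ => true⟩
      ⟨{false}, fun _ => true, {true}, fun _ => false⟩ :=
    ⟨rfl, fun _ _ => rfl, true, mem_singleton_self _, mem_singleton_self _, by simp⟩
  constructor
  · have huniv : ({false, true} : Finset Bool) = univ := by
      ext i
      cases i <;> simp
    rw [huniv, CM.pbProbCond_univ _ (joint_M2_false_ne_zero hq.ne hpx1.ne)]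
    simp [pbBasic_M2_false hM]
  · exact CM.pnProbCond_eq_zero_of_contradicts hM (by simp) (by simp) hcontra _ _

end
end
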